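/- arXiv:1105.2755 — 2 statements merged into one kernel-verified Lean document; each statement's English description precedes it below -/
import Mathlib

section
/- Under persistent connectivity (the directed graph on N with an edge (j,i) whenever ∫_0^∞ a_{ij}(s)ds = +∞ is strongly connected), the rescaling sequence (t_p)_{p∈ℕ} is well defined and tends to +∞ as p → +∞. -/
/-!
Fix a nonempty proper subset `S`. A path of persistent edges from outside `S` into `S` must cross
the cut, so some weight `a i j` with `i ∈ S`, `j ∉ S` has infinite integral
(`exists_crossing_edge`), and `t ↦ cutSum n a S t₀ t` grows to `+∞` (`tendsto_cutSum`). The minimum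
over the finitely many `S` is therefore a continuous function of `t` which vanishes at `t₀` and tends
to `+∞`; by the intermediate value theorem it takes the value `1`, and its level set is closed, so
there is a smallest such time (`isLeast_nextTime`).

For the divergence, each step of `nextTime` adds at least `1` to the cut sum of any fixed `S`, so
after `k` steps the cut sum from `0` is at least `k` (`le_cutSum_iterate`). As the cut sum from `0`
to `M` is a finite number for every `M`, and is monotone in time, the times eventually exceed `M`.
-/

open MeasureTheory Filter Finset
open scoped ENNReal

/-- Interaction weights: non-negative, measurable, integrable on bounded intervals. -/
def IsWeight (n : ℕ) (a : Fin n → Fin n → ℝ → ℝ) : Prop :=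
  ∀ i j : Fin n, (∀ t, 0 ≤ a i j t) ∧ Measurable (a i j) ∧
    ∀ T : ℝ, IntervalIntegrable (a i j) MeasureTheory.volume 0 T

/-- A trajectory of the continuous-time consensus system: a (locally absolutely) continuous
function satisfying the Carathéodory integral equation. -/
def IsTrajectory (n : ℕ) (a : Fin n → Fin n → ℝ → ℝ) (x : ℝ → Fin n → ℝ) : Prop :=
  (∀ i : Fin n, ContinuousOn (fun t => x t i) (Set.Ici (0:ℝ))) ∧
  (∀ i : Fin n, ∀ t : ℝ, 0 ≤ t →
    IntervalIntegrable (fun s => ∑ j : Fin n, a i j s * (x s j - x s i))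
      MeasureTheory.volume 0 t ∧
    x t i = x 0 i + ∫ s in (0:ℝ)..t, ∑ j : Fin n, a i j s * (x s j - x s i))

/-- Group diameter Δ_N(t). -/
noncomputable def diam (n : ℕ) (x : ℝ → Fin n → ℝ) (t : ℝ) : ℝ :=
  (⨆ i, x t i) - (⨅ i, x t i)

/-- Persistent connectivity: the graph with edge (j,i) whenever ∫_0^∞ a_{ij} = ∞
is strongly connected. -/
def PersistentConn (n : ℕ) (a : Fin n → Fin n → ℝ → ℝ) : Prop :=
  ∀ u v : Fin n, Relation.ReflTransGen
    (fun j i => ∫⁻ s in Set.Ioi (0:ℝ), ENNReal.ofReal (a i j s) = ⊤) u v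

noncomputable def cutSum (n : ℕ) (a : Fin n → Fin n → ℝ → ℝ)
    (S : Finset (Fin n)) (t0 t : ℝ) : ℝ :=
  ∑ i ∈ S, ∑ j ∈ Sᶜ, ∫ s in t0..t, a i j s

noncomputable def minCut (n : ℕ) (a : Fin n → Fin n → ℝ → ℝ) (t0 t : ℝ) : ℝ :=
  sInf ((fun S => cutSum n a S t0 t) '' {S : Finset (Fin n) | S.Nonempty ∧ S ≠ Finset.univ})

/-- The smallest `t ≥ t0` with `minCut n a t0 t = 1`. -/
noncomputable def nextTime (n : ℕ) (a : Fin n → Fin n → ℝ → ℝ) (t0 : ℝ) : ℝ :=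
  sInf {t : ℝ | t0 ≤ t ∧ minCut n a t0 t = 1}

/-- The rescaling sequence (t_p): t_0 = 0 and t_{p+1} is obtained from t_p by ⌊n/2⌋
steps of `nextTime`. -/
noncomputable def tpSeq (n : ℕ) (a : Fin n → Fin n → ℝ → ℝ) : ℕ → ℝ :=
  fun p => ((nextTime n a)^[n/2])^[p] 0

/-- Intermediate times t_p^q. -/
noncomputable def tpq (n : ℕ) (a : Fin n → Fin n → ℝ → ℝ) (p q : ℕ) : ℝ :=
  (nextTime n a)^[q] (tpSeq n a p)

open Classical in
/-- The ratio r_S(t) of reciprocal interaction weights across the cut (S, N∖S). -/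
noncomputable def rS (n : ℕ) (a : Fin n → Fin n → ℝ → ℝ) (S : Finset (Fin n)) (t : ℝ) : ℝ≥0∞ :=
  if 0 < ∑ i ∈ S, ∑ j ∈ Sᶜ, a j i t then
    ENNReal.ofReal ((∑ i ∈ S, ∑ j ∈ Sᶜ, a i j t) / (∑ i ∈ S, ∑ j ∈ Sᶜ, a j i t))
  else if (∑ i ∈ S, ∑ j ∈ Sᶜ, a i j t) = 0 then 1 else ⊤

/-- r(t): maximal ratio over nonempty proper subsets. -/
noncomputable def rmax (n : ℕ) (a : Fin n → Fin n → ℝ → ℝ) (t : ℝ) : ℝ≥0∞ :=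
  ⨆ S ∈ {S : Finset (Fin n) | S.Nonempty ∧ S ≠ Finset.univ}, rS n a S t

/-- 𝐫(t) = sup_{s ∈ [0,t]} r(s). -/
noncomputable def rbold (n : ℕ) (a : Fin n → Fin n → ℝ → ℝ) (t : ℝ) : ℝ≥0∞ :=
  ⨆ s ∈ Set.Icc (0:ℝ) t, rmax n a s

/-- σ_t sorts the pairs (x_i(t), i) lexicographically. -/
def IsSortingPerm (n : ℕ) (x : ℝ → Fin n → ℝ) (σ : ℝ → Equiv.Perm (Fin n)) : Prop :=
  ∀ t : ℝ, ∀ i j : Fin n, i < j →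
    x t (σ t i) < x t (σ t j) ∨ (x t (σ t i) = x t (σ t j) ∧ σ t i < σ t j)

theorem IsWeight.intervalIntegrable {n : ℕ} {a : Fin n → Fin n → ℝ → ℝ} (ha : IsWeight n a)
    (i j : Fin n) (s t : ℝ) : IntervalIntegrable (a i j) volume s t :=
  ((ha i j).2.2 s).symm.trans ((ha i j).2.2 t)

theorem IsWeight.cutSum_add {n : ℕ} {a : Fin n → Fin n → ℝ → ℝ} (ha : IsWeight n a)
    (S : Finset (Fin n)) (r s t : ℝ) :
    cutSum n a S r s + cutSum n a S s t = cutSum n a S r t := by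
  simp only [cutSum, ← Finset.sum_add_distrib]
  refine Finset.sum_congr rfl fun i _ => Finset.sum_congr rfl fun j _ => ?_
  exact intervalIntegral.integral_add_adjacent_intervals
    (ha.intervalIntegrable i j r s) (ha.intervalIntegrable i j s t)

theorem IsWeight.cutSum_nonneg {n : ℕ} {a : Fin n → Fin n → ℝ → ℝ} (ha : IsWeight n a)
    (S : Finset (Fin n)) {s t : ℝ} (hst : s ≤ t) : 0 ≤ cutSum n a S s t :=
  Finset.sum_nonneg fun i _ => Finset.sum_nonneg fun j _ =>
    intervalIntegral.integral_nonneg hst fun u _ => (ha i j).1 u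

theorem IsWeight.continuous_cutSum {n : ℕ} {a : Fin n → Fin n → ℝ → ℝ} (ha : IsWeight n a)
    (S : Finset (Fin n)) (s : ℝ) : Continuous (cutSum n a S s) := by
  unfold cutSum
  refine continuous_finsetSum _ fun i _ => continuous_finsetSum _ fun j _ => ?_
  exact intervalIntegral.continuous_primitive (ha.intervalIntegrable i j) s

/-- A path of persistent edges from outside `S` into `S` crosses the cut. -/
theorem exists_crossing_edge {n : ℕ} {a : Fin n → Fin n → ℝ → ℝ} (hconn : PersistentConn n a)
    {S : Finset (Fin n)} (hS : S.Nonempty) (hS' : S ≠ Finset.univ) :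
    ∃ i ∈ S, ∃ j ∈ Sᶜ, ∫⁻ s in Set.Ioi (0:ℝ), ENNReal.ofReal (a i j s) = ⊤ := by
  obtain ⟨v, hv⟩ := hS
  obtain ⟨u, hu⟩ : ∃ u, u ∉ S := by
    by_contra! h
    exact hS' (Finset.eq_univ_iff_forall.2 h)
  have key : v ∈ S → ∃ i ∈ S, ∃ j ∈ Sᶜ,
      ∫⁻ s in Set.Ioi (0:ℝ), ENNReal.ofReal (a i j s) = ⊤ := by
    induction hconn u v with
    | refl => exact fun h => absurd h hu
    | @tail b c _ hbc ih =>
      intro hc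
      by_cases hb : b ∈ S
      · exact ih hb hb
      · exact ⟨c, hc, b, Finset.mem_compl.2 hb, hbc⟩
  exact key hv

theorem IsWeight.tendsto_integral {n : ℕ} {a : Fin n → Fin n → ℝ → ℝ} (ha : IsWeight n a)
    {i j : Fin n} (h : ∫⁻ s in Set.Ioi (0:ℝ), ENNReal.ofReal (a i j s) = ⊤) :
    Tendsto (fun t => ∫ s in (0:ℝ)..t, a i j s) atTop atTop := by
  have hmono : Monotone (fun t => ∫ s in (0:ℝ)..t, a i j s) := by
    intro s t hst
    have h1 := intervalIntegral.integral_add_adjacent_intervals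
      (ha.intervalIntegrable i j 0 s) (ha.intervalIntegrable i j s t)
    have h2 : 0 ≤ ∫ u in s..t, a i j u :=
      intervalIntegral.integral_nonneg hst fun u _ => (ha i j).1 u
    change (∫ u in (0:ℝ)..s, a i j u) ≤ ∫ u in (0:ℝ)..t, a i j u
    linarith
  refine tendsto_atTop_atTop_of_monotone hmono fun M => ?_
  -- A bounded primitive would make `a i j` integrable on the half-line.
  by_contra! hM
  have hint : IntegrableOn (a i j) (Set.Ioi 0) := by
    refine integrableOn_Ioi_of_intervalIntegral_norm_bounded (l := atTop) (b := id) M 0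
      (fun t => ?_) tendsto_id (Eventually.of_forall fun t => ?_)
    · exact (ha.intervalIntegrable i j 0 t).1
    · simp only [Real.norm_of_nonneg ((ha i j).1 _)]
      exact (hM t).le
  have hfin := (hasFiniteIntegral_iff_ofReal
    (Eventually.of_forall fun t => (ha i j).1 t)).1 hint.2
  exact hfin.ne h

theorem tendsto_cutSum {n : ℕ} {a : Fin n → Fin n → ℝ → ℝ} (ha : IsWeight n a)
    (hconn : PersistentConn n a) {S : Finset (Fin n)} (hS : S.Nonempty) (hS' : S ≠ Finset.univ)
    (t0 : ℝ) : Tendsto (cutSum n a S t0) atTop atTop := by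
  obtain ⟨i, hi, j, hj, hij⟩ := exists_crossing_edge hconn hS hS'
  have h0 : Tendsto (cutSum n a S 0) atTop atTop := by
    refine tendsto_atTop_mono' atTop ?_ (ha.tendsto_integral hij)
    filter_upwards [eventually_ge_atTop (0:ℝ)] with t ht
    have hnn : ∀ i j, 0 ≤ ∫ s in (0:ℝ)..t, a i j s := fun i j =>
      intervalIntegral.integral_nonneg ht fun u _ => (ha i j).1 u
    calc (∫ s in (0:ℝ)..t, a i j s)
        ≤ ∑ j ∈ Sᶜ, ∫ s in (0:ℝ)..t, a i j s :=
          Finset.single_le_sum (f := fun j => ∫ s in (0:ℝ)..t, a i j s)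
            (fun j _ => hnn i j) hj
      _ ≤ cutSum n a S 0 t :=
          Finset.single_le_sum (f := fun i => ∑ j ∈ Sᶜ, ∫ s in (0:ℝ)..t, a i j s)
            (fun i _ => Finset.sum_nonneg fun j _ => hnn i j) hi
  refine (tendsto_atTop_add_const_left atTop (cutSum n a S t0 0) h0).congr fun t => ?_
  exact ha.cutSum_add S t0 0 t

/-- The cuts of `Fin n`, i.e. its nonempty proper subsets, as a finite set. -/
def cuts (n : ℕ) : Finset (Finset (Fin n)) :=
  Finset.univ.filter fun S => S.Nonempty ∧ S ≠ Finset.univ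

theorem mem_cuts {n : ℕ} {S : Finset (Fin n)} : S ∈ cuts n ↔ S.Nonempty ∧ S ≠ Finset.univ := by
  simp [cuts]

theorem cuts_nonempty {n : ℕ} (hn : 2 ≤ n) : (cuts n).Nonempty := by
  refine ⟨{⟨0, by omega⟩}, mem_cuts.2 ⟨Finset.singleton_nonempty _, fun h => ?_⟩⟩
  have := congrArg Finset.card h
  simp at this
  omega

theorem minCut_eq_inf' {n : ℕ} (hn : 2 ≤ n) (a : Fin n → Fin n → ℝ → ℝ) (t0 t : ℝ) :
    minCut n a t0 t = (cuts n).inf' (cuts_nonempty hn) fun S => cutSum n a S t0 t := by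
  rw [Finset.inf'_eq_csInf_image, minCut]
  congr 2
  ext S
  simp [mem_cuts]

theorem minCut_le_cutSum {n : ℕ} (hn : 2 ≤ n) (a : Fin n → Fin n → ℝ → ℝ)
    {S : Finset (Fin n)} (hS : S ∈ cuts n) (t0 t : ℝ) :
    minCut n a t0 t ≤ cutSum n a S t0 t := by
  rw [minCut_eq_inf' hn]
  exact Finset.inf'_le (fun S => cutSum n a S t0 t) hS

theorem continuous_minCut {n : ℕ} (hn : 2 ≤ n) {a : Fin n → Fin n → ℝ → ℝ} (ha : IsWeight n a)
    (t0 : ℝ) : Continuous (minCut n a t0) := by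
  rw [funext (minCut_eq_inf' hn a t0)]
  exact Continuous.finset_inf'_apply _ fun S _ => ha.continuous_cutSum S t0

theorem isLeast_nextTime {n : ℕ} (hn : 2 ≤ n) {a : Fin n → Fin n → ℝ → ℝ} (ha : IsWeight n a)
    (hconn : PersistentConn n a) (t0 : ℝ) :
    IsLeast {t : ℝ | t0 ≤ t ∧ minCut n a t0 t = 1} (nextTime n a t0) := by
  have hcont := continuous_minCut hn ha t0
  have hstart : minCut n a t0 t0 = 0 := by
    simp [minCut_eq_inf' hn, cutSum]
  obtain ⟨T, hT, hT1⟩ : ∃ T, t0 ≤ T ∧ 1 ≤ minCut n a t0 T := by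
    have hev : ∀ᶠ T in atTop, ∀ S ∈ cuts n, 1 ≤ cutSum n a S t0 T := by
      rw [Finset.eventually_all]
      intro S hS
      exact (tendsto_cutSum ha hconn (mem_cuts.1 hS).1 (mem_cuts.1 hS).2 t0).eventually_ge_atTop 1
    obtain ⟨T, hT, hT'⟩ := ((eventually_ge_atTop t0).and hev).exists
    refine ⟨T, hT, ?_⟩
    rw [minCut_eq_inf' hn]
    exact Finset.le_inf' _ _ hT'
  obtain ⟨t, ht, ht1⟩ := intermediate_value_Icc hT hcont.continuousOn
    (show (1:ℝ) ∈ Set.Icc (minCut n a t0 t0) (minCut n a t0 T) from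
      ⟨by rw [hstart]; exact zero_le_one, hT1⟩)
  refine IsClosed.isLeast_csInf ?_ ⟨t, ht.1, ht1⟩ ⟨t0, fun s hs => hs.1⟩
  exact isClosed_Ici.inter (isClosed_singleton.preimage hcont)

theorem le_cutSum_iterate {n : ℕ} (hn : 2 ≤ n) {a : Fin n → Fin n → ℝ → ℝ} (ha : IsWeight n a)
    (hconn : PersistentConn n a) {S : Finset (Fin n)} (hS : S ∈ cuts n) (k : ℕ) :
    (k : ℝ) ≤ cutSum n a S 0 ((nextTime n a)^[k] 0) := by
  induction k with
  | zero => simp [cutSum]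
  | succ k ih =>
    rw [Function.iterate_succ_apply']
    set u := (nextTime n a)^[k] 0
    have h1 := (isLeast_nextTime hn ha hconn u).1.2
    have h2 := minCut_le_cutSum hn a hS u (nextTime n a u)
    have h3 := ha.cutSum_add S 0 u (nextTime n a u)
    push_cast
    linarith

theorem tendsto_iterate_nextTime {n : ℕ} (hn : 2 ≤ n) {a : Fin n → Fin n → ℝ → ℝ}
    (ha : IsWeight n a) (hconn : PersistentConn n a) :
    Tendsto (fun k => (nextTime n a)^[k] 0) atTop atTop := by
  obtain ⟨S, hS⟩ := cuts_nonempty hn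
  refine tendsto_atTop.2 fun M => ?_
  filter_upwards [tendsto_natCast_atTop_atTop.eventually_gt_atTop (cutSum n a S 0 M)] with k hk
  by_contra! hlt
  have h1 := le_cutSum_iterate hn ha hconn hS k
  have h2 := ha.cutSum_add S 0 ((nextTime n a)^[k] 0) M
  have h3 := ha.cutSum_nonneg S hlt.le
  linarith

/-- under persistent connectivity the rescaling sequence is well defined
(each step of `nextTime` is genuinely the smallest admissible time) and tends to +∞. -/
theorem stmt3 (n : ℕ) (hn : 2 ≤ n) (a : Fin n → Fin n → ℝ → ℝ) (ha : IsWeight n a)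
    (hconn : PersistentConn n a) :
    (∀ t0 : ℝ, 0 ≤ t0 →
      IsLeast {t : ℝ | t0 ≤ t ∧ minCut n a t0 t = 1} (nextTime n a t0)) ∧
    Tendsto (tpSeq n a) atTop atTop := by
  refine ⟨fun t0 _ => isLeast_nextTime hn ha hconn t0, ?_⟩
  -- `tpSeq` is the subsequence of the iterates of `nextTime` along the multiples of `n / 2 ≥ 1`.
  have hsub : Tendsto (fun p : ℕ => n / 2 * p) atTop atTop :=
    tendsto_id.const_mul_atTop' (by omega)
  refine ((tendsto_iterate_nextTime hn ha hconn).comp hsub).congr fun p => ?_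
  simp only [Function.comp_apply, tpSeq, Function.iterate_mul]
end

section
/- If the persistent connectivity assumption holds and the weights are cut-balanced (there exists K ≥ 1 such that for every nonempty proper subset S ⊊ N and every t ≥ 0, K^{−1} Σ_{i∈S,j∉S} a_{ji}(t) ≤ Σ_{i∈S,j∉S} a_{ij}(t) ≤ K Σ_{i∈S,j∉S} a_{ji}(t)), then the trajectory reaches a consensus: all limits lim_{t→∞} x_i(t) exist and are equal. -/
/-!
Let `y₁ ≤ … ≤ yₙ` be the positions at time `t` in increasing order, and consider the Lyapunov
function `V = ∑ w k * y k` (`sortedSum`) with weights decreasing at least by a factor `2 * K` at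
each index, the last weight being negative so that the total weight is zero (`exists_goodWeights`).

Writing each difference `y l - y k` as a sum of gaps between consecutive positions, the derivative
of `V` becomes a sum over the gaps, and the coefficient of the `m`-th gap is
`∑_{k ≤ m < l} w k * a k l - ∑_{l ≤ m < k} w k * a k l`. Cut balance for the set of the `m` lowest
agents bounds the second flow by `K` times the first, and the decay of the weights makes the
coefficient at least a fixed multiple of the total flow across the cut (`cut_term_nonneg`). Hence
`V' ≥ c * ∑ i, ∑ j, a i j * |x j - x i|` with `c > 0` (`drift_perm`).

By the rearrangement inequality, `V` is the minimum over all permutations `σ` of the absolutely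
continuous functions `∑ k, w k * x (σ k)`; so `V` is absolutely continuous, and almost everywhere
its derivative is that of a minimizing branch (`integral_disagreement_le`). Since the weights sum to
zero, Chebyshev's inequality gives `V ≤ 0`, so `∑ i, ∑ j, a i j * |x j - x i|` is integrable on
`(0, ∞)`. All velocities are therefore integrable and every agent converges. Along an edge with
`∫ a i j = ∞` the limits of `i` and `j` must agree (`limits_eq`), and strong connectivity makes all
limits equal.
-/

open MeasureTheory Filter Finset
open scoped ENNReal

/-! ### The drift of a sorted weighted sum -/

/-- The half of cut balance used below: across every cut `S`, the influence of `S` on its complement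
is at most `K` times the influence of the complement on `S`. Replacing `S` by its complement turns
it into the other half, so nothing is lost. -/
def CutBound (n : ℕ) (K : ℝ) (b : Fin n → Fin n → ℝ) : Prop :=
  ∀ S : Finset (Fin n), S.Nonempty → S ≠ Finset.univ →
    ∑ i ∈ S, ∑ j ∈ Sᶜ, b j i ≤ K * ∑ i ∈ S, ∑ j ∈ Sᶜ, b i j

/-- The cut condition ranges over all subsets, hence is invariant under relabelling the agents. -/
lemma CutBound.perm {n : ℕ} {K : ℝ} {b : Fin n → Fin n → ℝ} (h : CutBound n K b)
    (σ : Equiv.Perm (Fin n)) : CutBound n K (fun k l => b (σ k) (σ l)) := by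
  intro S hS hS'
  have hc : (S.map σ.toEmbedding)ᶜ = Sᶜ.map σ.toEmbedding := by
    ext i
    simp [Finset.mem_map_equiv]
  have := h (S.map σ.toEmbedding) (hS.map) (fun hu => hS' (by
    ext i
    have : σ i ∈ S.map σ.toEmbedding := by rw [hu]; exact Finset.mem_univ _
    simpa [Finset.mem_map_equiv] using this))
  rw [hc] at this
  simpa [Finset.sum_map] using this

/-- Weights dropping by a factor at least `2 * K` from each index to every later one, all but the
last being at least `δ`. The last weight is allowed to be negative. -/
def GoodWeights (n : ℕ) (K δ : ℝ) (w : Fin n → ℝ) : Prop :=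
  ∀ k l : Fin n, k < l → δ ≤ w k ∧ 2 * K * w l ≤ w k

/-- The drift inequality for the threshold profile `k ↦ 1[m < k]`, the extreme rays of the cone of
monotone profiles. Below the threshold the weights are at least `w m`, above it at most
`w m / (2 * K)`, so the flow out of the cut, being at most `K` times the flow into it, costs at most
half of the gain; the other half pays for the terms with `c`. -/
lemma cut_term_nonneg {n : ℕ} {K δ c : ℝ} (hK : 1 ≤ K) (hc : 0 ≤ c) (hcδ : 2 * (1 + K) * c ≤ δ)
    {w : Fin n → ℝ} (hw : GoodWeights n K δ w)
    {b : Fin n → Fin n → ℝ} (hb0 : ∀ k l, 0 ≤ b k l) (hb : CutBound n K b)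
    (m : ℕ) (hm : m + 1 < n) :
    0 ≤ ∑ k : Fin n, ∑ l : Fin n, b k l *
      (w k * ((if m < l.1 then 1 else 0) - (if m < k.1 then 1 else 0)) -
        c * |(if m < l.1 then (1 : ℝ) else 0) - (if m < k.1 then 1 else 0)|) := by
  have hK0 : 0 < 2 * K := by linarith
  set M : Fin n := ⟨m, by omega⟩ with hM
  set S : Finset (Fin n) := Finset.univ.filter (fun k => k.1 ≤ m) with hS
  have hSc : Sᶜ = Finset.univ.filter (fun k => ¬ k.1 ≤ m) := by
    ext k; simp [hS]
  have hcut := hb S ⟨M, by simp [hS, hM]⟩ (fun h => by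
    have : (⟨m + 1, hm⟩ : Fin n) ∈ S := by rw [h]; exact Finset.mem_univ _
    simp [hS] at this)
  set A := ∑ i ∈ S, ∑ j ∈ Sᶜ, b i j with hA
  set B := ∑ i ∈ S, ∑ j ∈ Sᶜ, b j i with hB
  have hA0 : 0 ≤ A := Finset.sum_nonneg fun i _ => Finset.sum_nonneg fun j _ => hb0 i j
  have hδ : δ ≤ w M := (hw M ⟨m + 1, hm⟩ (by simp [hM, Fin.lt_def])).1
  have hA' : A = ∑ k : Fin n, ∑ l : Fin n, if k.1 ≤ m ∧ ¬ l.1 ≤ m then b k l else 0 := by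
    rw [hA, hSc, hS, Finset.sum_filter]
    refine Finset.sum_congr rfl fun k _ => ?_
    by_cases hk : k.1 ≤ m <;> simp [hk, Finset.sum_filter]
  have hB' : B = ∑ k : Fin n, ∑ l : Fin n, if l.1 ≤ m ∧ ¬ k.1 ≤ m then b k l else 0 := by
    rw [Finset.sum_comm, hB, hSc, hS, Finset.sum_filter]
    refine Finset.sum_congr rfl fun k _ => ?_
    by_cases hk : k.1 ≤ m <;> simp [hk, Finset.sum_filter]
  have key : (w M - c) * A - (w M / (2 * K) + c) * B ≤
      ∑ k : Fin n, ∑ l : Fin n, b k l *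
      (w k * ((if m < l.1 then 1 else 0) - (if m < k.1 then 1 else 0)) -
        c * |(if m < l.1 then (1 : ℝ) else 0) - (if m < k.1 then 1 else 0)|) := by
    rw [hA', hB']
    simp only [Finset.mul_sum]
    rw [← Finset.sum_sub_distrib]
    refine Finset.sum_le_sum fun k _ => ?_
    rw [← Finset.sum_sub_distrib]
    refine Finset.sum_le_sum fun l _ => ?_
    have hbkl := hb0 k l
    by_cases hk : k.1 ≤ m <;> by_cases hl : l.1 ≤ m
    · simp [hk, hl, not_lt.mpr hk, not_lt.mpr hl]
    · have h1 : w M ≤ w k := by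
        rcases eq_or_lt_of_le hk with h | h
        · have : k = M := Fin.ext h
          rw [this]
        · have h2 := (hw k M (by simpa [hM, Fin.lt_def] using h)).2
          have h3 : 0 ≤ w M := by
            have : 0 ≤ δ := le_trans (by positivity) hcδ
            linarith
          nlinarith
      simp [hk, hl, not_lt.mpr hk, not_le.mp hl]
      nlinarith
    · have h1 : w k ≤ w M / (2 * K) := by
        rw [le_div_iff₀ hK0]
        have := (hw M k (by simpa [hM, Fin.lt_def] using hk)).2
        linarith
      simp [hk, hl, not_lt.mpr hl, not_le.mp hk]
      nlinarith
    · simp [hk, hl, not_le.mp hk, not_le.mp hl]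
  refine le_trans ?_ key
  have h1 : 0 ≤ w M / (2 * K) + c := by
    have : 0 ≤ w M := by
      have : 0 ≤ δ := le_trans (by positivity) hcδ
      linarith
    positivity
  have h2 : (w M / (2 * K) + c) * B ≤ (w M / (2 * K) + c) * (K * A) :=
    mul_le_mul_of_nonneg_left hcut h1
  have h3 : (w M / (2 * K) + c) * (K * A) = (w M / 2 + c * K) * A := by
    field_simp
  have h4 : 0 ≤ (w M / 2 - c - c * K) * A := mul_nonneg (by linarith) hA0
  nlinarith

/-- Layer cake: up to a constant, a monotone profile is a nonnegative combination of threshold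
profiles, the coefficient `g m` being the gap between the values at `m` and `m + 1`. -/
lemma sorted_sub_eq {n : ℕ} (hn : 0 < n) {y : Fin n → ℝ} (hy : Monotone y) :
    ∃ g : ℕ → ℝ, (∀ m, 0 ≤ g m) ∧ ∀ k l : Fin n,
      y l - y k = ∑ m ∈ Finset.range (n - 1),
        g m * ((if m < l.1 then 1 else 0) - (if m < k.1 then 1 else 0)) := by
  -- `Y` extends `y` to all of `ℕ` by its last value.
  let Y : ℕ → ℝ := fun m => y ⟨min m (n - 1), by omega⟩
  have hY : Monotone Y := fun p q h => hy (by
    simp only [Fin.mk_le_mk]; omega)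
  refine ⟨fun m => Y (m + 1) - Y m, fun m => sub_nonneg.mpr (hY (Nat.le_succ m)), ?_⟩
  have hsum : ∀ k : Fin n, ∑ m ∈ Finset.range (n - 1),
      (Y (m + 1) - Y m) * (if m < k.1 then 1 else 0) = y k - Y 0 := by
    intro k
    have h1 : ∑ m ∈ Finset.range (n - 1), (Y (m + 1) - Y m) * (if m < k.1 then 1 else 0) =
        ∑ m ∈ Finset.range k.1, (Y (m + 1) - Y m) := by
      rw [← Finset.sum_subset (s₁ := Finset.range k.1)]
      · refine Finset.sum_congr rfl fun m hm => ?_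
        simp [Finset.mem_range.mp hm]
      · intro m hm
        have := k.2
        simp only [Finset.mem_range] at *
        omega
      · intro m _ hm
        simp only [Finset.mem_range] at hm
        simp [hm]
    rw [h1, Finset.sum_range_sub]
    congr 1
    simp only [Y]
    congr 1
    ext
    have := k.2
    simp only
    omega
  intro k l
  simp only [mul_sub, Finset.sum_sub_distrib, hsum]
  ring

/-- Since `|y l - y k|` is additive on the cone of monotone profiles, the drift inequality follows
from its threshold case `cut_term_nonneg`. -/
lemma sorted_drift {n : ℕ} (hn : 0 < n) {K δ c : ℝ} (hK : 1 ≤ K) (hc : 0 ≤ c)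
    (hcδ : 2 * (1 + K) * c ≤ δ) {w : Fin n → ℝ} (hw : GoodWeights n K δ w)
    {b : Fin n → Fin n → ℝ} (hb0 : ∀ k l, 0 ≤ b k l) (hb : CutBound n K b)
    {y : Fin n → ℝ} (hy : Monotone y) :
    c * ∑ k, ∑ l, b k l * |y l - y k| ≤ ∑ k, w k * ∑ l, b k l * (y l - y k) := by
  obtain ⟨g, hg, hgy⟩ := sorted_sub_eq hn hy
  have habs : ∀ k l : Fin n, |y l - y k| = ∑ m ∈ Finset.range (n - 1),
      g m * |(if m < l.1 then (1 : ℝ) else 0) - (if m < k.1 then 1 else 0)| := by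
    intro k l
    rcases le_total k l with h | h
    · rw [abs_of_nonneg (sub_nonneg.mpr (hy h)), hgy]
      refine Finset.sum_congr rfl fun m _ => ?_
      rw [abs_of_nonneg]
      have : k.1 ≤ l.1 := h
      split_ifs <;> first | omega | norm_num
    · rw [abs_of_nonpos (sub_nonpos.mpr (hy h)), hgy, ← Finset.sum_neg_distrib]
      refine Finset.sum_congr rfl fun m _ => ?_
      rw [abs_of_nonpos, mul_neg]
      have : l.1 ≤ k.1 := h
      split_ifs <;> first | omega | norm_num
  have key : ∑ k, w k * ∑ l, b k l * (y l - y k) - c * ∑ k, ∑ l, b k l * |y l - y k| =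
      ∑ m ∈ Finset.range (n - 1), g m * ∑ k : Fin n, ∑ l : Fin n, b k l *
      (w k * ((if m < l.1 then 1 else 0) - (if m < k.1 then 1 else 0)) -
        c * |(if m < l.1 then (1 : ℝ) else 0) - (if m < k.1 then 1 else 0)|) := by
    simp only [habs]
    simp only [hgy, Finset.mul_sum]
    rw [← Finset.sum_sub_distrib, Finset.sum_comm]
    refine Finset.sum_congr rfl fun k _ => ?_
    rw [← Finset.sum_sub_distrib, Finset.sum_comm]
    refine Finset.sum_congr rfl fun l _ => ?_
    rw [← Finset.sum_sub_distrib]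
    refine Finset.sum_congr rfl fun m _ => ?_
    ring
  have : 0 ≤ ∑ m ∈ Finset.range (n - 1), g m * ∑ k : Fin n, ∑ l : Fin n, b k l *
      (w k * ((if m < l.1 then 1 else 0) - (if m < k.1 then 1 else 0)) -
        c * |(if m < l.1 then (1 : ℝ) else 0) - (if m < k.1 then 1 else 0)|) :=
    Finset.sum_nonneg fun m hm => mul_nonneg (hg m)
      (cut_term_nonneg hK hc hcδ hw hb0 hb m (by have := Finset.mem_range.mp hm; omega))
  linarith

/-- `sorted_drift` for an unsorted profile `z`, through a permutation `σ` that sorts it. -/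
lemma drift_perm {n : ℕ} (hn : 0 < n) {K δ c : ℝ} (hK : 1 ≤ K) (hc : 0 ≤ c)
    (hcδ : 2 * (1 + K) * c ≤ δ) {w : Fin n → ℝ} (hw : GoodWeights n K δ w)
    {b : Fin n → Fin n → ℝ} (hb0 : ∀ k l, 0 ≤ b k l) (hb : CutBound n K b)
    {z : Fin n → ℝ} (σ : Equiv.Perm (Fin n)) (hσ : Monotone (z ∘ σ)) :
    c * ∑ i, ∑ j, b i j * |z j - z i| ≤
      ∑ k, w k * ∑ j, b (σ k) j * (z j - z (σ k)) := by
  have h := sorted_drift hn hK hc hcδ hw (fun k l => hb0 (σ k) (σ l)) (hb.perm σ) hσ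
  have h1 : ∑ i, ∑ j, b i j * |z j - z i| =
      ∑ k, ∑ l, b (σ k) (σ l) * |(z ∘ σ) l - (z ∘ σ) k| := by
    rw [← Equiv.sum_comp σ]
    refine Finset.sum_congr rfl fun k _ => ?_
    rw [← Equiv.sum_comp σ]
    rfl
  have h2 : ∀ k, ∑ j, b (σ k) j * (z j - z (σ k)) =
      ∑ l, b (σ k) (σ l) * ((z ∘ σ) l - (z ∘ σ) k) := by
    intro k
    rw [← Equiv.sum_comp σ]
    rfl
  simp only [h1, h2]
  exact h

/-- Geometric weights `(2 * K)⁻¹ ^ k`, with the last one replaced by minus the sum of the others. -/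
lemma exists_goodWeights {n : ℕ} (hn : 2 ≤ n) {K : ℝ} (hK : 1 ≤ K) :
    ∃ (δ : ℝ) (w : Fin n → ℝ), 0 < δ ∧ GoodWeights n K δ w ∧ ∑ k, w k = 0 := by
  obtain ⟨N, rfl⟩ : ∃ N, n = N + 1 := ⟨n - 1, by omega⟩
  have hK1 : 1 ≤ 2 * K := by linarith
  have hr0 : 0 < (2 * K)⁻¹ := by positivity
  have hr1 : (2 * K)⁻¹ ≤ 1 := inv_le_one_of_one_le₀ hK1
  refine ⟨(2 * K)⁻¹ ^ N, Fin.snoc (α := fun _ => ℝ) (fun k : Fin N => (2 * K)⁻¹ ^ k.1)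
    (-∑ k : Fin N, (2 * K)⁻¹ ^ k.1), by positivity, ?_, ?_⟩
  · intro k l hkl
    have hk : k.1 < N := by have := l.2; have : k.1 < l.1 := hkl; omega
    obtain ⟨k, rfl⟩ : ∃ k' : Fin N, k = k'.castSucc := ⟨⟨k.1, hk⟩, rfl⟩
    simp only [Fin.snoc_castSucc]
    refine ⟨pow_le_pow_of_le_one hr0.le hr1 (by simp), ?_⟩
    induction l using Fin.lastCases with
    | last =>
      simp only [Fin.snoc_last]
      have h1 : 0 ≤ ∑ k : Fin N, (2 * K)⁻¹ ^ k.1 := Finset.sum_nonneg fun _ _ => by positivity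
      have h2 : 0 ≤ (2 * K)⁻¹ ^ k.1 := by positivity
      nlinarith
    | cast l =>
      simp only [Fin.snoc_castSucc]
      have hkl' : k.1 + 1 ≤ l.1 := hkl
      have := pow_le_pow_of_le_one hr0.le hr1 hkl'
      calc 2 * K * (2 * K)⁻¹ ^ l.1 ≤ 2 * K * (2 * K)⁻¹ ^ (k.1 + 1) := by gcongr
        _ = (2 * K)⁻¹ ^ k.1 := by rw [pow_succ]; field_simp
  · rw [Fin.sum_univ_castSucc]
    simp

/-! ### The Lyapunov function and its integrated drift -/

/-- The weighted sum `∑ k, w k * y k`, where `y` is `z` rearranged in increasing order. -/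
noncomputable def sortedSum {n : ℕ} (w z : Fin n → ℝ) : ℝ :=
  ∑ k, w k * z (Tuple.sort z k)

/-- Rearrangement inequality: for antitone weights, sorting minimizes the weighted sum. -/
lemma sortedSum_le {n : ℕ} {w : Fin n → ℝ} (hw : Antitone w) (z : Fin n → ℝ)
    (σ : Equiv.Perm (Fin n)) : sortedSum w z ≤ ∑ k, w k * z (σ k) := by
  have h : Antivary w (z ∘ Tuple.sort z) := by
    intro k l hkl
    exact hw ((Tuple.monotone_sort z).reflect_lt hkl).le
  have := h.sum_mul_le_sum_mul_comp_perm (σ := σ.trans (Tuple.sort z).symm)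
  simpa [sortedSum] using this

/-- Chebyshev's sum inequality for weights of total mass zero. -/
lemma sortedSum_nonpos {n : ℕ} {w : Fin n → ℝ} (hw : Antitone w) (hw0 : ∑ k, w k = 0)
    (z : Fin n → ℝ) : sortedSum w z ≤ 0 := by
  have h : Antivary w (z ∘ Tuple.sort z) := by
    intro k l hkl
    exact hw ((Tuple.monotone_sort z).reflect_lt hkl).le
  have h2 := h.card_mul_sum_le_sum_mul_sum
  rw [hw0, zero_mul] at h2
  by_cases hn : n = 0
  · subst hn; simp [sortedSum]
  · have : (0 : ℝ) < n := by positivity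
    simp only [Fintype.card_fin] at h2
    exact nonpos_of_mul_nonpos_right h2 this

lemma dist_sortedSum_le {n : ℕ} {w : Fin n → ℝ} (hw : Antitone w) (z z' : Fin n → ℝ) :
    dist (sortedSum w z) (sortedSum w z') ≤ (∑ k, |w k|) * ∑ i, |z i - z' i| := by
  have key : ∀ z z' : Fin n → ℝ,
      sortedSum w z - sortedSum w z' ≤ (∑ k, |w k|) * ∑ i, |z i - z' i| := by
    intro z z'
    have h := sortedSum_le hw z (Tuple.sort z')
    calc sortedSum w z - sortedSum w z'
        ≤ ∑ k, w k * (z (Tuple.sort z' k) - z' (Tuple.sort z' k)) := by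
          simp only [mul_sub, Finset.sum_sub_distrib]
          exact sub_le_sub_right h _
      _ ≤ ∑ k, |w k| * ∑ i, |z i - z' i| := by
          refine Finset.sum_le_sum fun k _ => ?_
          refine (le_abs_self _).trans ?_
          rw [abs_mul]
          refine mul_le_mul_of_nonneg_left ?_ (abs_nonneg _)
          exact Finset.single_le_sum (f := fun i => |z i - z' i|)
            (fun i _ => abs_nonneg _) (Finset.mem_univ _)
      _ = _ := by rw [Finset.sum_mul]
  rw [Real.dist_eq, abs_le]
  refine ⟨?_, key z z'⟩
  have := key z' z
  simp only [abs_sub_comm (z' _)] at this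
  linarith

/-- The total interaction strength `∑ i, ∑ j, b i j * |z j - z i|`. It dominates the speed of each
agent. -/
noncomputable def disagreement {n : ℕ} (b : Fin n → Fin n → ℝ) (z : Fin n → ℝ) : ℝ :=
  ∑ i, ∑ j, b i j * |z j - z i|

lemma intervalIntegrable_pair {n : ℕ} {a : Fin n → Fin n → ℝ → ℝ} (ha : IsWeight n a)
    {x : ℝ → Fin n → ℝ} (hx : IsTrajectory n a x) (i j : Fin n) {T : ℝ} (hT : 0 ≤ T) :
    IntervalIntegrable (fun s => a i j s * |x s j - x s i|) volume 0 T := by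
  refine ((ha i j).2.2 T).mul_continuousOn ?_
  rw [Set.uIcc_of_le hT]
  exact (((hx.1 j).sub (hx.1 i)).abs).mono Set.Icc_subset_Ici_self

lemma intervalIntegrable_disagreement {n : ℕ} {a : Fin n → Fin n → ℝ → ℝ} (ha : IsWeight n a)
    {x : ℝ → Fin n → ℝ} (hx : IsTrajectory n a x) {T : ℝ} (hT : 0 ≤ T) :
    IntervalIntegrable (fun s => disagreement (fun i j => a i j s) (x s)) volume 0 T := by
  simp only [disagreement, intervalIntegrable_iff]
  exact integrable_finsetSum _ fun i _ => integrable_finsetSum _ fun j _ =>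
    intervalIntegrable_iff.mp (intervalIntegrable_pair ha hx i j hT)

/-- The increments of the sorted sum are controlled by those of the trajectory
(`dist_sortedSum_le`), which are increments of the indefinite integrals of the velocities. -/
lemma absolutelyContinuous_sortedSum {n : ℕ} {a : Fin n → Fin n → ℝ → ℝ}
    {x : ℝ → Fin n → ℝ} (hx : IsTrajectory n a x) {w : Fin n → ℝ} (hw : Antitone w)
    {T : ℝ} (hT : 0 ≤ T) :
    AbsolutelyContinuousOnInterval (fun t => sortedSum w (x t)) 0 T := by
  have hI := fun i : Fin n => ((hx.2 i T hT).1).absolutelyContinuousOnInterval_intervalIntegral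
    (c := 0) (by simp)
  unfold AbsolutelyContinuousOnInterval at hI ⊢
  have hsum := (tendsto_finsetSum Finset.univ fun i _ => hI i).const_mul (∑ k, |w k|)
  simp only [Finset.sum_const_zero, mul_zero] at hsum
  refine squeeze_zero' (Eventually.of_forall fun E => Finset.sum_nonneg fun _ _ => dist_nonneg)
    ?_ hsum
  have hmem : ∀ᶠ E in AbsolutelyContinuousOnInterval.totalLengthFilter ⊓
      𝓟 (AbsolutelyContinuousOnInterval.disjWithin 0 T),
      E ∈ AbsolutelyContinuousOnInterval.disjWithin 0 T :=
    mem_inf_of_right (mem_principal_self _)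
  filter_upwards [hmem] with E hE
  rw [Finset.sum_comm, Finset.mul_sum]
  refine Finset.sum_le_sum fun r hr => (dist_sortedSum_le hw _ _).trans (le_of_eq ?_)
  congr 1
  refine Finset.sum_congr rfl fun i _ => ?_
  obtain ⟨h1, h2⟩ := hE.1 r hr
  rw [Set.uIcc_of_le hT] at h1 h2
  rw [(hx.2 i _ h1.1).2, (hx.2 i _ h2.1).2, Real.dist_eq]
  congr 1
  ring

lemma GoodWeights.antitone {n : ℕ} {K δ : ℝ} {w : Fin n → ℝ} (hw : GoodWeights n K δ w)
    (hK : 1 ≤ K) (hδ : 0 ≤ δ) : Antitone w := by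
  intro k l hkl
  rcases hkl.eq_or_lt with rfl | h
  · exact le_rfl
  · obtain ⟨h1, h2⟩ := hw k l h
    by_contra! h3
    nlinarith

/-- The sorted sum grows at rate at least `c` times the disagreement. At a point `t` of
differentiability, its derivative is that of `u ↦ ∑ k, w k * x u (σ k)` with `σ` sorting `x t`
and kept fixed: the latter function lies above the sorted sum and touches it at `t`. -/
lemma integral_disagreement_le {n : ℕ} (hn : 0 < n) {a : Fin n → Fin n → ℝ → ℝ}
    (ha : IsWeight n a) {x : ℝ → Fin n → ℝ} (hx : IsTrajectory n a x)
    {K δ c : ℝ} (hK : 1 ≤ K) (hc : 0 ≤ c) (hcδ : 2 * (1 + K) * c ≤ δ)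
    {w : Fin n → ℝ} (hw : GoodWeights n K δ w)
    (hcut : ∀ t, 0 ≤ t → CutBound n K (fun i j => a i j t)) {T : ℝ} (hT : 0 ≤ T) :
    c * ∫ s in (0 : ℝ)..T, disagreement (fun i j => a i j s) (x s) ≤
      sortedSum w (x T) - sortedSum w (x 0) := by
  have hδ : 0 ≤ δ := le_trans (by positivity) hcδ
  have hanti := hw.antitone hK hδ
  have hAC := absolutelyContinuous_sortedSum hx hanti hT
  rw [← hAC.integral_deriv_eq_sub, ← intervalIntegral.integral_const_mul]
  refine intervalIntegral.integral_mono_ae_restrict hT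
    ((intervalIntegrable_disagreement ha hx hT).const_mul c) hAC.intervalIntegrable_deriv ?_
  have hder : ∀ᵐ t, ∀ i : Fin n, t ∈ Set.uIcc 0 T →
      HasDerivAt (fun u => ∫ s in (0 : ℝ)..u, ∑ j, a i j s * (x s j - x s i))
        (∑ j, a i j t * (x t j - x t i)) t := by
    rw [ae_all_iff]
    intro i
    filter_upwards [(hx.2 i T hT).1.ae_hasDerivAt_integral] with t ht htm
    exact ht htm 0 (by simp)
  have h0 : ∀ᵐ t : ℝ, t ≠ 0 := by simp [ae_iff, measure_singleton]
  rw [EventuallyLE, ae_restrict_iff' measurableSet_Icc]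
  filter_upwards [hAC.ae_differentiableAt, hder, h0] with t hdiff hd ht0 ht
  have htu : t ∈ Set.uIcc 0 T := by rwa [Set.uIcc_of_le hT]
  have htpos : 0 < t := lt_of_le_of_ne ht.1 (Ne.symm ht0)
  have hxd : ∀ i : Fin n, HasDerivAt (fun u => x u i) (∑ j, a i j t * (x t j - x t i)) t := by
    intro i
    refine ((hd i htu).const_add (x 0 i)).congr_of_eventuallyEq ?_
    filter_upwards [Ioi_mem_nhds htpos] with u hu
    exact (hx.2 i u (le_of_lt hu)).2
  set σ := Tuple.sort (x t) with hσ
  have hL : HasDerivAt (fun u => ∑ k, w k * x u (σ k))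
      (∑ k, w k * ∑ j, a (σ k) j t * (x t j - x t (σ k))) t :=
    HasDerivAt.fun_sum fun k _ => (hxd (σ k)).const_mul (w k)
  have hmin : IsLocalMin (fun u => ∑ k, w k * x u (σ k) - sortedSum w (x u)) t := by
    refine Eventually.of_forall fun u => ?_
    have h1 : ∑ k, w k * x t (σ k) - sortedSum w (x t) = 0 := sub_self _
    have h2 := sortedSum_le hanti (x u) σ
    simp only [h1]
    linarith
  have hz := hmin.hasDerivAt_eq_zero (hL.sub (hdiff htu).hasDerivAt)
  have hdr := drift_perm hn hK hc hcδ hw (fun k l => (ha k l).1 t) (hcut t ht.1) σ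
    (Tuple.monotone_sort (x t))
  simp only [disagreement]
  linarith

/-! ### Convergence -/

/-- Domination by a function whose integrals over all intervals `[0, T]` are bounded. -/
lemma integrableOn_of_abs_le {f D : ℝ → ℝ} {M : ℝ}
    (hf : ∀ T : ℝ, 0 ≤ T → IntervalIntegrable f volume 0 T)
    (hD : ∀ T : ℝ, 0 ≤ T → IntervalIntegrable D volume 0 T)
    (hfD : ∀ t, |f t| ≤ D t)
    (hM : ∀ T : ℝ, 0 ≤ T → ∫ s in (0 : ℝ)..T, D s ≤ M) : IntegrableOn f (Set.Ioi 0) := by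
  refine integrableOn_Ioi_of_intervalIntegral_norm_bounded (l := atTop) (b := fun T : ℝ => T)
    M 0 (fun T => ?_) tendsto_id ?_
  · rcases le_total 0 T with h | h
    · exact (hf T h).1
    · simp [h]
  · filter_upwards [eventually_ge_atTop 0] with T hT
    exact (intervalIntegral.integral_mono_on hT (hf T hT).norm (hD T hT)
      fun t _ => hfD t).trans (hM T hT)

lemma row_le_disagreement {n : ℕ} {b : Fin n → Fin n → ℝ} (hb : ∀ i j, 0 ≤ b i j)
    (z : Fin n → ℝ) (i : Fin n) : ∑ j, b i j * |z j - z i| ≤ disagreement b z :=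
  Finset.single_le_sum (f := fun i => ∑ j, b i j * |z j - z i|)
    (fun i _ => Finset.sum_nonneg fun j _ => mul_nonneg (hb i j) (abs_nonneg _))
    (Finset.mem_univ i)

/-- If `p` and `q` had different limits, `α * |p - q|` would eventually dominate a positive multiple
of `α`, whose integral is infinite. -/
lemma limits_eq {α p q : ℝ → ℝ} {P Q : ℝ} (hα : ∀ t, 0 ≤ α t) (hm : Measurable α)
    (hloc : ∀ T : ℝ, IntervalIntegrable α volume 0 T)
    (hp : Tendsto p atTop (nhds P)) (hq : Tendsto q atTop (nhds Q))
    (hint : IntegrableOn (fun s => α s * |p s - q s|) (Set.Ioi 0))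
    (hinf : ∫⁻ s in Set.Ioi (0 : ℝ), ENNReal.ofReal (α s) = ⊤) : P = Q := by
  by_contra hne
  have hη : 0 < |P - Q| := abs_pos.mpr (sub_ne_zero.mpr hne)
  have hev := ((hp.sub hq).abs.eventually_const_lt (half_lt_self hη)).and (eventually_ge_atTop 0)
  obtain ⟨T, hT⟩ := eventually_atTop.mp hev
  have hT0 : 0 ≤ T := (hT T le_rfl).2
  have h1 : IntegrableOn α (Set.Ioi T) := by
    refine Integrable.mono' ((hint.mono_set (Set.Ioi_subset_Ioi hT0)).const_mul (|P - Q| / 2)⁻¹)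
      hm.aestronglyMeasurable ?_
    filter_upwards [ae_restrict_mem measurableSet_Ioi] with s hs
    have h2 := (hT s (le_of_lt hs)).1
    rw [Real.norm_of_nonneg (hα s), inv_mul_eq_div, le_div_iff₀ (by positivity)]
    exact mul_le_mul_of_nonneg_left h2.le (hα s)
  have h2 : IntegrableOn α (Set.Ioi 0) := by
    rw [← Set.Ioc_union_Ioi_eq_Ioi hT0]
    exact (hloc T).1.union h1
  have h3 := (hasFiniteIntegral_iff_ofReal (Eventually.of_forall hα)).mp h2.2
  exact h3.ne hinf

/-- persistent connectivity and cut-balanced weights imply consensus. -/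
theorem stmt6 (n : ℕ) (hn : 2 ≤ n) (a : Fin n → Fin n → ℝ → ℝ) (ha : IsWeight n a)
    (x : ℝ → Fin n → ℝ) (hx : IsTrajectory n a x)
    (hconn : PersistentConn n a)
    (hcb : ∃ K : ℝ, 1 ≤ K ∧ ∀ S : Finset (Fin n), S.Nonempty → S ≠ Finset.univ →
      ∀ t : ℝ, 0 ≤ t →
        K⁻¹ * (∑ i ∈ S, ∑ j ∈ Sᶜ, a j i t) ≤ ∑ i ∈ S, ∑ j ∈ Sᶜ, a i j t ∧
        ∑ i ∈ S, ∑ j ∈ Sᶜ, a i j t ≤ K * (∑ i ∈ S, ∑ j ∈ Sᶜ, a j i t)) :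
    ∃ c : ℝ, ∀ i : Fin n, Tendsto (fun t => x t i) atTop (nhds c) := by
  obtain ⟨K, hK, hcb⟩ := hcb
  have hcut : ∀ t, 0 ≤ t → CutBound n K (fun i j => a i j t) := by
    intro t ht S hS hS'
    exact (inv_mul_le_iff₀ (by linarith)).mp (hcb S hS hS' t ht).1
  obtain ⟨δ, w, hδ, hw, hw0⟩ := exists_goodWeights hn hK
  set c : ℝ := δ / (2 * (1 + K)) with hc
  have hcpos : 0 < c := by positivity
  have hcδ : 2 * (1 + K) * c ≤ δ := le_of_eq (by rw [hc]; field_simp)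
  have hM : ∀ T : ℝ, 0 ≤ T → ∫ s in (0 : ℝ)..T, disagreement (fun i j => a i j s) (x s) ≤
      -sortedSum w (x 0) / c := by
    intro T hT
    have h1 := integral_disagreement_le (by omega) ha hx hK hcpos.le hcδ hw hcut hT
    have h2 := sortedSum_nonpos (hw.antitone hK hδ.le) hw0 (x T)
    rw [le_div_iff₀ hcpos]
    linarith
  have hD := fun (T : ℝ) (hT : 0 ≤ T) => intervalIntegrable_disagreement ha hx hT
  have hlim : ∀ i : Fin n, ∃ L : ℝ, Tendsto (fun t => x t i) atTop (nhds L) := by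
    intro i
    have hF : IntegrableOn (fun s => ∑ j, a i j s * (x s j - x s i)) (Set.Ioi 0) := by
      refine integrableOn_of_abs_le (fun T hT => (hx.2 i T hT).1) hD (fun t => ?_) hM
      refine le_trans ?_ (row_le_disagreement (fun i j => (ha i j).1 t) (x t) i)
      refine (Finset.abs_sum_le_sum_abs _ _).trans (le_of_eq ?_)
      refine Finset.sum_congr rfl fun j _ => ?_
      rw [abs_mul, abs_of_nonneg ((ha i j).1 t)]
    refine ⟨_, ((intervalIntegral_tendsto_integral_Ioi 0 hF tendsto_id).const_add
      (x 0 i)).congr' ?_⟩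
    filter_upwards [eventually_ge_atTop 0] with t ht
    exact ((hx.2 i t ht).2).symm
  choose L hL using hlim
  have hedge : ∀ j i : Fin n, ∫⁻ s in Set.Ioi (0 : ℝ), ENNReal.ofReal (a i j s) = ⊤ →
      L j = L i := by
    intro j i hinf
    refine limits_eq (ha i j).1 (ha i j).2.1 (ha i j).2.2 (hL j) (hL i) ?_ hinf
    refine integrableOn_of_abs_le (fun T hT => intervalIntegrable_pair ha hx i j hT) hD
      (fun t => ?_) hM
    have hnn : ∀ j, 0 ≤ a i j t * |x t j - x t i| :=
      fun j => mul_nonneg ((ha i j).1 t) (abs_nonneg _)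
    rw [abs_of_nonneg (hnn j)]
    exact (Finset.single_le_sum (f := fun j => a i j t * |x t j - x t i|)
      (fun j _ => hnn j) (Finset.mem_univ j)).trans
      (row_le_disagreement (fun i j => (ha i j).1 t) (x t) i)
  let u : Fin n := ⟨0, by omega⟩
  refine ⟨L u, fun i => ?_⟩
  have hui : L u = L i := by
    induction hconn u i with
    | refl => rfl
    | tail _ h ih => exact ih.trans (hedge _ _ h)
  rw [hui]
  exact hL i
end
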